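/- Let G1 and G2 be connected simple graphs with globally bounded vertex degree that are quasi-isometric with respect to their graph metrics. Then for any reference vertices x1 of G1 and x2 of G2 the upper internal scaling dimensions coincide: limsup_{r→∞} ln β_{G1}(x1,r)/ln r = limsup_{r→∞} ln β_{G2}(x2,r)/ln r, and likewise the lower internal scaling dimensions (with liminf in place of limsup) coincide. -/

import Mathlib

open Filter

/-- The growth function of a graph: the number of vertices at graph distance at most `k`
from `x`. -/
noncomputable def graphGrowth {V : Type*} (G : SimpleGraph V) (x : V) (k : ℕ) : ℕ :=
  Set.ncard {y : V | G.dist x y ≤ k}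

/-!
A quasi-isometry `F` is large-scale Lipschitz, and its fibres have bounded diameter, hence bounded
cardinality since the degree is bounded. So `F` maps a ball of radius `r` into a ball of radius
`K * r` at most `C`-to-one, which gives `β₁ r ≤ C * β₂ (K * r)`; a coarse inverse of `F` gives the
same inequality with the two graphs exchanged. Neither the factor `C` nor the rescaling by `K`
affects a bound of the form `β r ≤ r ^ a` or `r ^ a ≤ β r` by more than an arbitrarily small change
of the exponent `a`, and the two scaling dimensions are determined by the exponents occurring in
such bounds. Comparing sets of exponents also covers superpolynomial growth, where a real `limsup`
or `liminf` takes a junk value.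
-/

section LimsupOrder

variable {α ι κ : Type*} [ConditionallyCompleteLinearOrder α]

theorem csSup_congr_of_upperBounds_eq [NoBotOrder α] {s t : Set α}
    (h : upperBounds s = upperBounds t) : sSup s = sSup t := by
  have nonempty_iff (u : Set α) : u.Nonempty ↔ upperBounds u ≠ Set.univ := by
    refine ⟨fun ⟨a, ha⟩ hu ↦ ?_, fun hu ↦ ?_⟩
    · obtain ⟨b, hb⟩ := exists_not_ge a
      exact hb ((hu ▸ Set.mem_univ b : b ∈ upperBounds u) ha)
    · exact Set.nonempty_iff_ne_empty.2 fun h ↦ hu (h ▸ upperBounds_empty)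
  by_cases hs : BddAbove s
  · have ht : BddAbove t := by rwa [BddAbove, ← h]
    rcases s.eq_empty_or_nonempty with rfl | hne
    · have : ¬t.Nonempty := by rw [nonempty_iff, ← h, ← nonempty_iff]; exact Set.not_nonempty_empty
      rw [Set.not_nonempty_iff_eq_empty.1 this]
    · have hne' : t.Nonempty := by rwa [nonempty_iff, ← h, ← nonempty_iff]
      have hlub : IsLUB t (sSup s) := by rw [IsLUB, ← h]; exact isLUB_csSup hne hs
      exact hlub.unique (isLUB_csSup hne' ht)
  · have ht : ¬BddAbove t := by rwa [BddAbove, ← h]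
    rw [csSup_of_not_bddAbove hs, csSup_of_not_bddAbove ht]

theorem csSup_congr_of_forall_lt_mem [DenselyOrdered α] [NoBotOrder α] {s t : Set α}
    (hst : ∀ a ∈ s, ∀ a' < a, a' ∈ t) (hts : ∀ a ∈ t, ∀ a' < a, a' ∈ s) : sSup s = sSup t := by
  have upperBounds_subset {s t : Set α} (h : ∀ a ∈ s, ∀ a' < a, a' ∈ t) :
      upperBounds t ⊆ upperBounds s :=
    fun u hu a ha ↦ le_of_forall_lt_imp_le_of_dense fun a' ha' ↦ hu (h a ha a' ha')
  exact csSup_congr_of_upperBounds_eq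
    ((upperBounds_subset hts).antisymm (upperBounds_subset hst))

variable [DenselyOrdered α] {f : Filter ι} {g : Filter κ} {u : ι → α} {w : κ → α}

theorem liminf_congr_of_forall_lt [NoBotOrder α]
    (huw : ∀ a' a, a' < a → (∀ᶠ i in f, a ≤ u i) → ∀ᶠ k in g, a' ≤ w k)
    (hwu : ∀ a' a, a' < a → (∀ᶠ k in g, a ≤ w k) → ∀ᶠ i in f, a' ≤ u i) :
    liminf u f = liminf w g := by
  rw [liminf_eq, liminf_eq]
  exact csSup_congr_of_forall_lt_mem (fun a ha a' h ↦ huw a' a h ha)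
    (fun a ha a' h ↦ hwu a' a h ha)

theorem limsup_congr_of_forall_lt [NoTopOrder α]
    (huw : ∀ a a', a < a' → (∀ᶠ i in f, u i ≤ a) → ∀ᶠ k in g, w k ≤ a')
    (hwu : ∀ a a', a < a' → (∀ᶠ k in g, w k ≤ a) → ∀ᶠ i in f, u i ≤ a') :
    limsup u f = limsup w g :=
  liminf_congr_of_forall_lt (α := αᵒᵈ) (fun a' a h ↦ huw a a' h) (fun a' a h ↦ hwu a a' h)

end LimsupOrder

section GrowthExponent

theorem eventually_const_mul_rpow_le_rpow (C : ℝ) {a a' : ℝ} (h : a < a') :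
    ∀ᶠ x : ℝ in atTop, C * x ^ a ≤ x ^ a' := by
  filter_upwards [(tendsto_rpow_atTop (sub_pos.2 h)).eventually_ge_atTop C, eventually_gt_atTop 0]
    with x hC hx
  calc C * x ^ a ≤ x ^ (a' - a) * x ^ a := by gcongr
    _ = x ^ a' := by rw [← Real.rpow_add hx, sub_add_cancel]

variable {b c : ℕ → ℕ} {a a' : ℝ}

theorem eventually_log_div_log_le_iff (hb : ∀ r, 0 < b r) :
    (∀ᶠ r : ℕ in atTop, Real.log (b r) / Real.log r ≤ a) ↔
      ∀ᶠ r : ℕ in atTop, (b r : ℝ) ≤ (r : ℝ) ^ a := by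
  refine eventually_congr ?_
  filter_upwards [eventually_gt_atTop 1] with r hr
  rw [Real.log_div_log]
  exact Real.logb_le_iff_le_rpow (mod_cast hr) (mod_cast hb r)

theorem eventually_le_log_div_log_iff (hb : ∀ r, 0 < b r) :
    (∀ᶠ r : ℕ in atTop, a ≤ Real.log (b r) / Real.log r) ↔
      ∀ᶠ r : ℕ in atTop, (r : ℝ) ^ a ≤ b r := by
  refine eventually_congr ?_
  filter_upwards [eventually_gt_atTop 1] with r hr
  rw [Real.log_div_log]
  exact Real.le_logb_iff_rpow_le (mod_cast hr) (mod_cast hb r)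

/-- The preorder on growth functions of geometric group theory: `b` is at most `c`, up to a
multiplicative constant and a rescaling of the argument. -/
def GrowthDominated (b c : ℕ → ℕ) : Prop :=
  ∃ C K : ℕ, 0 < C ∧ 0 < K ∧ ∀ᶠ r in atTop, b r ≤ C * c (K * r)

namespace GrowthDominated

theorem eventually_le_rpow (h : GrowthDominated b c) (haa' : a < a')
    (hc : ∀ᶠ r : ℕ in atTop, (c r : ℝ) ≤ (r : ℝ) ^ a) :
    ∀ᶠ r : ℕ in atTop, (b r : ℝ) ≤ (r : ℝ) ^ a' := by
  obtain ⟨C, K, -, hK, hbc⟩ := h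
  have tendsto_mul : Tendsto (fun r : ℕ ↦ K * r) atTop atTop := tendsto_id.const_mul_atTop' hK
  filter_upwards [hbc, tendsto_mul.eventually hc, tendsto_natCast_atTop_atTop.eventually
    (eventually_const_mul_rpow_le_rpow (C * (K : ℝ) ^ a) haa')] with r hbr hcr hr
  calc (b r : ℝ) ≤ C * c (K * r) := mod_cast hbr
    _ ≤ C * ((K * r : ℕ) : ℝ) ^ a := by gcongr
    _ = C * (K : ℝ) ^ a * (r : ℝ) ^ a := by
      rw [Nat.cast_mul, Real.mul_rpow K.cast_nonneg r.cast_nonneg, mul_assoc]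
    _ ≤ (r : ℝ) ^ a' := hr

theorem eventually_rpow_le (h : GrowthDominated c b) (hb : ∀ r, 0 < b r) (hmono : Monotone b)
    (haa' : a' < a) (hc : ∀ᶠ r : ℕ in atTop, (r : ℝ) ^ a ≤ c r) :
    ∀ᶠ r : ℕ in atTop, (r : ℝ) ^ a' ≤ b r := by
  rcases le_or_gt a 0 with ha | ha
  · filter_upwards [eventually_ge_atTop 1] with r hr
    calc (r : ℝ) ^ a' ≤ 1 := Real.rpow_le_one_of_one_le_of_nonpos (mod_cast hr) (haa'.le.trans ha)
      _ ≤ b r := mod_cast hb r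
  obtain ⟨C, K, hC, hK, hcb⟩ := h
  have tendsto_div : Tendsto (fun r : ℕ ↦ r / K) atTop atTop := Nat.tendsto_div_const_atTop hK.ne'
  filter_upwards [tendsto_div.eventually hcb, tendsto_div.eventually hc,
    tendsto_div.eventually_ge_atTop 1, tendsto_natCast_atTop_atTop.eventually
      (eventually_const_mul_rpow_le_rpow ((2 * K : ℝ) ^ a * C) haa')] with r hcs hs hs_pos hr
  have le_mul_div : r ≤ 2 * K * (r / K) := by
    have := Nat.lt_mul_div_succ r hK
    nlinarith
  have rpow_div_le : ((r / K : ℕ) : ℝ) ^ a ≤ C * b r := by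
    refine hs.trans ?_
    exact_mod_cast hcs.trans (Nat.mul_le_mul_left C (hmono (Nat.mul_div_le r K)))
  refine le_of_mul_le_mul_left (a := (2 * K : ℝ) ^ a * C) ?_ (by positivity)
  calc (2 * K : ℝ) ^ a * C * (r : ℝ) ^ a' ≤ (r : ℝ) ^ a := hr
    _ ≤ (2 * K * (r / K : ℕ) : ℝ) ^ a := by
      gcongr
      exact_mod_cast le_mul_div
    _ = (2 * K : ℝ) ^ a * ((r / K : ℕ) : ℝ) ^ a := Real.mul_rpow (by positivity) (by positivity)
    _ ≤ (2 * K : ℝ) ^ a * (C * b r) := by gcongr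
    _ = (2 * K : ℝ) ^ a * C * b r := (mul_assoc _ _ _).symm

theorem limsup_log_div_log_eq (hbc : GrowthDominated b c) (hcb : GrowthDominated c b)
    (hb : ∀ r, 0 < b r) (hc : ∀ r, 0 < c r) :
    limsup (fun r : ℕ ↦ Real.log (b r) / Real.log r) atTop =
      limsup (fun r : ℕ ↦ Real.log (c r) / Real.log r) atTop := by
  apply limsup_congr_of_forall_lt <;>
    simp only [eventually_log_div_log_le_iff hb, eventually_log_div_log_le_iff hc]
  exacts [fun _ _ ↦ hcb.eventually_le_rpow, fun _ _ ↦ hbc.eventually_le_rpow]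

theorem liminf_log_div_log_eq (hbc : GrowthDominated b c) (hcb : GrowthDominated c b)
    (hb : ∀ r, 0 < b r) (hc : ∀ r, 0 < c r) (hb_mono : Monotone b) (hc_mono : Monotone c) :
    liminf (fun r : ℕ ↦ Real.log (b r) / Real.log r) atTop =
      liminf (fun r : ℕ ↦ Real.log (c r) / Real.log r) atTop := by
  apply liminf_congr_of_forall_lt <;>
    simp only [eventually_le_log_div_log_iff hb, eventually_le_log_div_log_iff hc]
  exacts [fun _ _ ↦ hbc.eventually_rpow_le hc hc_mono, fun _ _ ↦ hcb.eventually_rpow_le hb hb_mono]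

end GrowthDominated

end GrowthExponent

section GraphBall

variable {V : Type*} {G : SimpleGraph V}

/-- The closed ball `B_G(x, k)` of the graph metric, whose cardinality is `graphGrowth G x k`.
`SimpleGraph.dist` is `0` between different components, so this is the expected set only when `G`
is connected. -/
def graphBall (G : SimpleGraph V) (x : V) (k : ℕ) : Set V :=
  {y | G.dist x y ≤ k}

theorem ncard_graphBall (x : V) (k : ℕ) : (graphBall G x k).ncard = graphGrowth G x k :=
  rfl

theorem self_mem_graphBall (x : V) (k : ℕ) : x ∈ graphBall G x k := by
  simp [graphBall]

theorem graphBall_mono (x : V) : Monotone (graphBall G x) :=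
  fun _ _ hkl _ hy ↦ le_trans hy hkl

theorem graphBall_zero (hG : G.Connected) (x : V) : graphBall G x 0 = {x} := by
  ext y
  simp [graphBall, hG.dist_eq_zero_iff, eq_comm]

theorem graphBall_succ_subset (hG : G.Connected) (x : V) (k : ℕ) :
    graphBall G x (k + 1) ⊆ ⋃ z ∈ graphBall G x k, insert z (G.neighborSet z) := by
  intro y hy
  obtain ⟨p, hp⟩ := hG.exists_walk_length_eq_dist y x
  have hy : p.length ≤ k + 1 := by rwa [hp, SimpleGraph.dist_comm]
  cases p with
  | nil => exact Set.mem_biUnion (self_mem_graphBall x k) (Set.mem_insert x _)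
  | @cons _ z _ hadj q =>
    have hz : z ∈ graphBall G x k := by
      rw [SimpleGraph.Walk.length_cons] at hy
      rw [graphBall, Set.mem_ofPred_eq, SimpleGraph.dist_comm]
      exact (SimpleGraph.dist_le q).trans (by lia)
    exact Set.mem_biUnion hz (Set.mem_insert_of_mem z hadj.symm)

theorem finite_graphBall (hG : G.Connected) (hfin : ∀ x, (G.neighborSet x).Finite) (x : V) (k : ℕ) :
    (graphBall G x k).Finite := by
  induction k with
  | zero => simp [graphBall_zero hG]
  | succ k ih =>
    exact (ih.biUnion fun z _ ↦ (hfin z).insert z).subset (graphBall_succ_subset hG x k)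

theorem graphGrowth_pos (hG : G.Connected) (hfin : ∀ x, (G.neighborSet x).Finite) (x : V) (k : ℕ) :
    0 < graphGrowth G x k :=
  (Set.ncard_pos (finite_graphBall hG hfin x k)).2 ⟨x, self_mem_graphBall x k⟩

theorem graphGrowth_mono (hG : G.Connected) (hfin : ∀ x, (G.neighborSet x).Finite) (x : V) :
    Monotone (graphGrowth G x) :=
  fun _ l hkl ↦ Set.ncard_le_ncard (graphBall_mono x hkl) (finite_graphBall hG hfin x l)

theorem graphGrowth_le_pow (hG : G.Connected) {v : ℕ}
    (hdeg : ∀ x, (G.neighborSet x).Finite ∧ (G.neighborSet x).ncard ≤ v) (x : V) (k : ℕ) :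
    graphGrowth G x k ≤ (v + 1) ^ k := by
  have hfin := finite_graphBall hG (fun x ↦ (hdeg x).1) x
  induction k with
  | zero => simp [← ncard_graphBall, graphBall_zero hG]
  | succ k ih =>
    set s := (hfin k).toFinset
    have hsub : graphBall G x (k + 1) ⊆ ⋃ z ∈ s, insert z (G.neighborSet z) := by
      simpa [s] using graphBall_succ_subset hG x k
    have hunion : (⋃ z ∈ s, insert z (G.neighborSet z)).Finite :=
      s.finite_toSet.biUnion fun z _ ↦ (hdeg z).1.insert z
    calc graphGrowth G x (k + 1)
        ≤ (⋃ z ∈ s, insert z (G.neighborSet z)).ncard := Set.ncard_le_ncard hsub hunion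
      _ ≤ ∑ z ∈ s, (insert z (G.neighborSet z)).ncard := s.set_ncard_biUnion_le _
      _ ≤ ∑ _z ∈ s, (v + 1) := Finset.sum_le_sum fun z _ ↦
          (Set.ncard_insert_le z _).trans (Nat.succ_le_succ (hdeg z).2)
      _ = graphGrowth G x k * (v + 1) := by
        rw [Finset.sum_const, smul_eq_mul, ← Set.ncard_eq_toFinset_card _ (hfin k), ncard_graphBall]
      _ ≤ (v + 1) ^ (k + 1) := Nat.mul_le_mul_right _ ih

end GraphBall

section CoarseMap

variable {V W : Type*} {G : SimpleGraph V} {G' : SimpleGraph W}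

theorem ncard_le_mul_ncard_of_mapsTo {F : V → W} {s : Set V} {t : Set W} {n : ℕ}
    (hs : s.Finite) (ht : t.Finite) (hF : Set.MapsTo F s t)
    (hn : ∀ y ∈ s, {z ∈ s | F z = F y}.ncard ≤ n) : s.ncard ≤ n * t.ncard := by
  classical
  rw [Set.ncard_eq_toFinset_card s hs]
  calc hs.toFinset.card ≤ n * (hs.toFinset.image F).card := by
        refine Finset.card_le_mul_card_image _ n ?_
        simp only [Finset.forall_mem_image, hs.mem_toFinset]
        intro y hy
        rw [← Set.ncard_coe_finset]
        simpa using hn y hy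
    _ ≤ n * t.ncard := by
      gcongr
      rw [← Set.ncard_coe_finset]
      exact Set.ncard_le_ncard (by simpa using hF.image_subset) ht

theorem exists_mapsTo_graphBall (hG' : G'.Connected) {F : V → W} {A B : ℝ}
    (hF : ∀ y z, (G'.dist (F y) (F z) : ℝ) ≤ A * G.dist y z + B) (x : V) (x' : W) :
    ∃ K > 0, ∀ r ≥ 1, Set.MapsTo F (graphBall G x r) (graphBall G' x' (K * r)) := by
  refine ⟨⌈A⌉₊ + ⌈B⌉₊ + G'.dist x' (F x) + 1, by positivity, fun r hr y (hy : G.dist x y ≤ r) ↦ ?_⟩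
  have hlip : G'.dist (F x) (F y) ≤ ⌈A⌉₊ * G.dist x y + ⌈B⌉₊ := by
    rify
    refine (hF x y).trans ?_
    gcongr <;> exact Nat.le_ceil _
  calc G'.dist x' (F y) ≤ G'.dist x' (F x) + G'.dist (F x) (F y) := hG'.dist_triangle
    _ ≤ G'.dist x' (F x) * r + (⌈A⌉₊ * r + ⌈B⌉₊ * r) := by
      refine Nat.add_le_add (Nat.le_mul_of_pos_right _ hr) (hlip.trans ?_)
      gcongr
      exact Nat.le_mul_of_pos_right _ hr
    _ ≤ (⌈A⌉₊ + ⌈B⌉₊ + G'.dist x' (F x) + 1) * r := by lia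

theorem growthDominated_of_coarseLipschitz (hG : G.Connected) (hG' : G'.Connected) {v : ℕ}
    (hdeg : ∀ x, (G.neighborSet x).Finite ∧ (G.neighborSet x).ncard ≤ v)
    (hfin' : ∀ x', (G'.neighborSet x').Finite) {F : V → W} {A B D : ℝ}
    (hF : ∀ y z, (G'.dist (F y) (F z) : ℝ) ≤ A * G.dist y z + B)
    (hfib : ∀ y z, F y = F z → (G.dist y z : ℝ) ≤ D) (x : V) (x' : W) :
    GrowthDominated (graphGrowth G x) (graphGrowth G' x') := by
  have hfin := finite_graphBall hG fun x ↦ (hdeg x).1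
  obtain ⟨K, hK, hmaps⟩ := exists_mapsTo_graphBall hG' hF x x'
  refine ⟨(v + 1) ^ ⌊D⌋₊, K, by positivity, hK, ?_⟩
  filter_upwards [eventually_ge_atTop 1] with r hr
  refine ncard_le_mul_ncard_of_mapsTo (hfin x r) (finite_graphBall hG' hfin' x' (K * r))
    (hmaps r hr) fun y _ ↦ ?_
  have fibre_subset : {z ∈ graphBall G x r | F z = F y} ⊆ graphBall G y ⌊D⌋₊ :=
    fun z hz ↦ Nat.le_floor (hfib y z hz.2.symm)
  exact (Set.ncard_le_ncard fibre_subset (hfin y _)).trans (graphGrowth_le_pow hG hdeg y _)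

theorem dist_le_of_inv_mul_dist_sub_le {F : V → W} {lam ε : ℝ} (hlam : 0 < lam)
    (hF : ∀ y z, lam⁻¹ * (G.dist y z : ℝ) - ε ≤ (G'.dist (F y) (F z) : ℝ)) (y z : V) :
    (G.dist y z : ℝ) ≤ lam * G'.dist (F y) (F z) + lam * ε := by
  rw [← mul_add, ← inv_mul_le_iff₀ hlam, ← sub_le_iff_le_add]
  exact hF y z

section CoarseRightInverse

variable {F : V → W} {H : W → V} {ε' : ℝ}

theorem abs_dist_sub_dist_le_of_coarseRightInverse (hG' : G'.Connected)
    (hH : ∀ y, (G'.dist (F (H y)) y : ℝ) ≤ ε') (y z : W) :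
    |(G'.dist (F (H y)) (F (H z)) : ℝ) - G'.dist y z| ≤ 2 * ε' := by
  have triangle (p q r : W) : (G'.dist p r : ℝ) ≤ G'.dist p q + G'.dist q r :=
    mod_cast hG'.dist_triangle
  have hy' : (G'.dist y (F (H y)) : ℝ) ≤ ε' := by simpa only [G'.dist_comm] using hH y
  have hz' : (G'.dist z (F (H z)) : ℝ) ≤ ε' := by simpa only [G'.dist_comm] using hH z
  rw [abs_sub_le_iff]
  constructor
  · linarith [triangle (F (H y)) y (F (H z)), triangle y z (F (H z)), hH y]
  · linarith [triangle y (F (H y)) z, triangle (F (H y)) (F (H z)) z, hH z]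

theorem dist_coarseRightInverse_le (hG' : G'.Connected)
    (hH : ∀ y, (G'.dist (F (H y)) y : ℝ) ≤ ε') {A B : ℝ} (hA : 0 ≤ A)
    (hF : ∀ y z, (G.dist y z : ℝ) ≤ A * G'.dist (F y) (F z) + B) (y z : W) :
    (G.dist (H y) (H z) : ℝ) ≤ A * G'.dist y z + (A * (2 * ε') + B) := by
  have h := (abs_sub_le_iff.1 (abs_dist_sub_dist_le_of_coarseRightInverse hG' hH y z)).1
  calc (G.dist (H y) (H z) : ℝ) ≤ A * G'.dist (F (H y)) (F (H z)) + B := hF _ _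
    _ ≤ A * (2 * ε' + G'.dist y z) + B := by
      gcongr
      exact sub_le_iff_le_add.1 h
    _ = A * G'.dist y z + (A * (2 * ε') + B) := by ring

theorem dist_le_of_coarseRightInverse_eq (hG' : G'.Connected)
    (hH : ∀ y, (G'.dist (F (H y)) y : ℝ) ≤ ε') (y z : W) (hyz : H y = H z) :
    (G'.dist y z : ℝ) ≤ 2 * ε' := by
  simpa [hyz] using abs_dist_sub_dist_le_of_coarseRightInverse hG' hH y z

end CoarseRightInverse

end CoarseMap

/-- Quasi-isometric connected graphs of globally bounded vertex degree have the same upper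
and the same lower internal scaling dimension, for any choice of reference vertices. -/
theorem scalingDimension_eq_of_quasiIsometric
    {V₁ V₂ : Type*} (G₁ : SimpleGraph V₁) (G₂ : SimpleGraph V₂)
    (hconn₁ : G₁.Connected) (hconn₂ : G₂.Connected)
    (v : ℕ)
    (hdeg₁ : ∀ x : V₁, (G₁.neighborSet x).Finite ∧ (G₁.neighborSet x).ncard ≤ v)
    (hdeg₂ : ∀ y : V₂, (G₂.neighborSet y).Finite ∧ (G₂.neighborSet y).ncard ≤ v)
    (F : V₁ → V₂) (lam ε ε' : ℝ) (hlam : 1 ≤ lam) (hε : 0 ≤ ε) (hε' : 0 ≤ ε')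
    (hqie : ∀ x y : V₁,
      lam⁻¹ * (G₁.dist x y : ℝ) - ε ≤ (G₂.dist (F x) (F y) : ℝ) ∧
      (G₂.dist (F x) (F y) : ℝ) ≤ lam * (G₁.dist x y : ℝ) + ε)
    (hdense : ∀ y : V₂, ∃ x : V₁, (G₂.dist (F x) y : ℝ) ≤ ε')
    (x₁ : V₁) (x₂ : V₂) :
    limsup (fun r : ℕ => Real.log (graphGrowth G₁ x₁ r) / Real.log r) atTop =
      limsup (fun r : ℕ => Real.log (graphGrowth G₂ x₂ r) / Real.log r) atTop ∧
    liminf (fun r : ℕ => Real.log (graphGrowth G₁ x₁ r) / Real.log r) atTop =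
      liminf (fun r : ℕ => Real.log (graphGrowth G₂ x₂ r) / Real.log r) atTop := by
  have hfin₁ x := (hdeg₁ x).1
  have hfin₂ y := (hdeg₂ y).1
  have hlam_pos : 0 < lam := one_pos.trans_le hlam
  have hlower := dist_le_of_inv_mul_dist_sub_le hlam_pos fun x y ↦ (hqie x y).1
  have hfib x y (hxy : F x = F y) : (G₁.dist x y : ℝ) ≤ lam * ε := by simpa [hxy] using hlower x y
  choose H hH using hdense
  have h₁₂ : GrowthDominated (graphGrowth G₁ x₁) (graphGrowth G₂ x₂) :=
    growthDominated_of_coarseLipschitz hconn₁ hconn₂ hdeg₁ hfin₂ (fun x y ↦ (hqie x y).2) hfib x₁ x₂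
  have h₂₁ : GrowthDominated (graphGrowth G₂ x₂) (graphGrowth G₁ x₁) :=
    growthDominated_of_coarseLipschitz hconn₂ hconn₁ hdeg₂ hfin₁
      (dist_coarseRightInverse_le hconn₂ hH hlam_pos.le hlower)
      (dist_le_of_coarseRightInverse_eq hconn₂ hH) x₂ x₁
  have hpos₁ := graphGrowth_pos hconn₁ hfin₁ x₁
  have hpos₂ := graphGrowth_pos hconn₂ hfin₂ x₂
  exact ⟨h₁₂.limsup_log_div_log_eq h₂₁ hpos₁ hpos₂, h₁₂.liminf_log_div_log_eq h₂₁ hpos₁ hpos₂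
    (graphGrowth_mono hconn₁ hfin₁ x₁) (graphGrowth_mono hconn₂ hfin₂ x₂)⟩
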